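/- arXiv:1701.00465 — 2 statements merged into one kernel-verified Lean document; each statement's English description precedes it below -/
import Mathlib

section
/- Let $k, r \in \mathbb{N}$ and let $E$ be the set of $r$-element subsets of $\{1, \dots, 2r+k\}$. If $E = \bigcup_{j=1}^k E_j$, then there exist $j \leq k$ and two disjoint sets $e_1, e_2 \in E_j$. -/
/-!
A signed set is a pair `(P, N)` of disjoint finite sets; these are the faces of the cross-polytope,
and `(N, P)` is the face antipodal to `(P, N)`. If the nonempty signed sets are given signs,
opposite at antipodal faces, then the number of maximal flags of signed sets with support `D` all of
whose members have sign `1` is odd. This is a case of Ky Fan's lemma, and it is proved by deleting a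
point from `D`: the flags through `(P, N)` and `(N, P)` together number, modulo `2`, the flags
through the facets of `(P, N)`, because every face of codimension two lies in exactly two facets.
Twisting the signs by the parity of the support makes the signs along such a flag alternate.

Given a coloring of the `r`-sets in which disjoint sets have different colors, let the sign of a
signed set with at least `2 * r` points tell which of its two parts contains an `r`-set of the
largest color available. As long as that color stays the same, so does the sign. Hence along an
alternating flag the largest color increases with every point after the first `2 * r`, and `k`
further points force a color that is at least `k` when colors are counted from `0`.
-/

namespace Kneser

open Finset

section SumsModTwo

variable {V R : Type*} [DecidableEq V]

theorem sum_sum_erase_eq_zero [Semiring R] [CharP R 2] (D : Finset V) {f : V → V → R}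
    (hf : ∀ i j, f i j = f j i) : ∑ i ∈ D, ∑ j ∈ D.erase i, f i j = 0 := by
  rw [sum_sigma']
  refine sum_involution (fun p _ => ⟨p.2, p.1⟩) ?_ ?_ ?_ fun _ _ => rfl
  · rintro ⟨i, j⟩ -
    rw [hf j i, CharTwo.add_self_eq_zero]
  · rintro ⟨i, j⟩ hij - heq
    exact (mem_erase.1 (mem_sigma.1 hij).2).1 (congrArg Sigma.fst heq)
  · rintro ⟨i, j⟩ hij
    simp only [mem_sigma, mem_erase] at hij ⊢
    exact ⟨hij.2.2, hij.2.1.symm, hij.1⟩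

theorem sum_powerset_erase_eq_zero [Semiring R] [CharP R 2] {D : Finset V} {j : V} (hj : j ∈ D)
    (f : Finset V → R) : ∑ A ∈ D.powerset, f (A.erase j) = 0 := by
  rw [← insert_erase hj, sum_powerset_insert (notMem_erase j D), ← sum_add_distrib]
  refine sum_eq_zero fun A _ => ?_
  rw [erase_insert_eq_erase, CharTwo.add_self_eq_zero]

theorem sum_powerset_sdiff [AddCommMonoid R] (D : Finset V) (f : Finset V → R) :
    ∑ A ∈ D.powerset, f (D \ A) = ∑ A ∈ D.powerset, f A :=
  have invol : ∀ A ∈ D.powerset, D \ (D \ A) = A := fun _ hA =>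
    Finset.sdiff_sdiff_eq_self (mem_powerset.1 hA)
  sum_nbij' (D \ ·) (D \ ·) (by simp) (by simp) invol invol fun _ _ => rfl

end SumsModTwo

section SignedSets

variable {V : Type*} [DecidableEq V] {s : Finset V → Finset V → ZMod 2} {P N D : Finset V}

/-- A labelling of the signed sets by signs, written additively, that takes opposite values at
antipodal signed sets. Nothing is required at the empty signed set or when `P` and `N` overlap. -/
def IsAntipodal (s : Finset V → Finset V → ZMod 2) : Prop :=
  ∀ ⦃P N⦄, Disjoint P N → (P ∪ N).Nonempty → s N P = s P N + 1

theorem card_erase_union_erase {j : V} (hj : j ∈ P ∪ N) :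
    #(P.erase j ∪ N.erase j) + 1 = #(P ∪ N) := by
  rw [← erase_union_distrib, card_erase_add_one hj]

/-- The number modulo `2` of maximal flags `∅ = X₀ < X₁ < ⋯ < Xₙ = (P, N)` of signed sets such that
`s` takes the value `1` at each of `X₁, …, Xₙ`. -/
def flagCount (s : Finset V → Finset V → ZMod 2) (P N : Finset V) : ZMod 2 :=
  if P ∪ N = ∅ then 1
  else s P N * ∑ j ∈ (P ∪ N).attach, flagCount s (P.erase j) (N.erase j)
termination_by #(P ∪ N)
decreasing_by
  have := card_erase_union_erase j.2
  omega

/-- The number modulo `2` of flags as in `flagCount` that end at a facet of `(P, N)`. -/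
def facetCount (s : Finset V → Finset V → ZMod 2) (P N : Finset V) : ZMod 2 :=
  ∑ j ∈ P ∪ N, flagCount s (P.erase j) (N.erase j)

theorem flagCount_of_union_eq_empty (h : P ∪ N = ∅) : flagCount s P N = 1 := by
  rw [flagCount, if_pos h]

theorem flagCount_of_nonempty (h : (P ∪ N).Nonempty) :
    flagCount s P N = s P N * facetCount s P N := by
  rw [flagCount, if_neg h.ne_empty, facetCount,
    sum_attach (P ∪ N) fun j => flagCount s (P.erase j) (N.erase j)]

theorem sum_facetCount_erase (s : Finset V → Finset V → ZMod 2) (P N : Finset V) :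
    ∑ j ∈ P ∪ N, facetCount s (P.erase j) (N.erase j) = 0 := by
  simp only [facetCount, ← erase_union_distrib]
  refine sum_sum_erase_eq_zero _ fun i j => ?_
  simp only [erase_right_comm (a := i) (b := j)]

theorem IsAntipodal.flagCount_swap (hs : IsAntipodal s) (hPN : Disjoint P N) :
    flagCount s N P = flagCount s P N + facetCount s P N := by
  induction hn : #(P ∪ N) generalizing P N with
  | zero =>
    have hempty : P ∪ N = ∅ := card_eq_zero.1 hn
    rw [flagCount_of_union_eq_empty hempty, flagCount_of_union_eq_empty (union_comm P N ▸ hempty),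
      facetCount, hempty, sum_empty, add_zero]
  | succ n ih =>
    have hne : (P ∪ N).Nonempty := card_pos.1 (by omega)
    have facetCount_swap : facetCount s N P = facetCount s P N := calc
      facetCount s N P = ∑ j ∈ P ∪ N, flagCount s (N.erase j) (P.erase j) := by
        rw [facetCount, union_comm]
      _ = ∑ j ∈ P ∪ N,
            (flagCount s (P.erase j) (N.erase j) + facetCount s (P.erase j) (N.erase j)) :=
        sum_congr rfl fun j hj => ih (hPN.mono (erase_subset _ _) (erase_subset _ _))
          (by have := card_erase_union_erase hj; omega)
      _ = facetCount s P N := by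
        rw [sum_add_distrib, sum_facetCount_erase, add_zero, facetCount]
    rw [flagCount_of_nonempty (union_comm P N ▸ hne), flagCount_of_nonempty hne, hs hPN hne,
      facetCount_swap]
    ring

theorem sum_facetCount_insert (s : Finset V → Finset V → ZMod 2) {i : V} (hi : i ∉ D) :
    ∑ A ∈ D.powerset, facetCount s A (insert i (D \ A)) =
      ∑ A ∈ D.powerset, flagCount s A (D \ A) := by
  have support : ∀ A ∈ D.powerset, A ∪ insert i (D \ A) = insert i D := fun A hA => by
    rw [union_insert, union_sdiff_of_subset (mem_powerset.1 hA)]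
  have facet_eq : ∀ j ∈ D, ∀ A,
      (insert i (D \ A)).erase j = insert i (D.erase j \ A.erase j) := fun j hj A => by
    rw [erase_insert_of_ne (by grind), erase_sdiff_distrib]
  calc ∑ A ∈ D.powerset, facetCount s A (insert i (D \ A))
    _ = ∑ j ∈ insert i D, ∑ A ∈ D.powerset,
          flagCount s (A.erase j) ((insert i (D \ A)).erase j) := by
      rw [sum_comm]
      exact sum_congr rfl fun A hA => by rw [facetCount, support A hA]
    _ = ∑ A ∈ D.powerset, flagCount s (A.erase i) ((insert i (D \ A)).erase i) := by
      rw [sum_insert hi, add_eq_left]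
      refine sum_eq_zero fun j hj => ?_
      simp only [facet_eq j hj]
      exact sum_powerset_erase_eq_zero hj fun B => flagCount s B (insert i (D.erase j \ B))
    _ = ∑ A ∈ D.powerset, flagCount s A (D \ A) := by
      refine sum_congr rfl fun A hA => ?_
      rw [erase_eq_of_notMem fun h => hi (mem_powerset.1 hA h), erase_insert (by simp [hi])]

theorem IsAntipodal.sum_flagCount_eq_one (hs : IsAntipodal s) (D : Finset V) :
    ∑ A ∈ D.powerset, flagCount s A (D \ A) = 1 := by
  induction D using Finset.induction_on with
  | empty => simp [flagCount_of_union_eq_empty]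
  | insert i D hi ih =>
    have notMem {A} (hA : A ∈ D.powerset) : i ∉ A := fun h => hi (mem_powerset.1 hA h)
    calc ∑ A ∈ (insert i D).powerset, flagCount s A (insert i D \ A)
      _ = ∑ A ∈ D.powerset, flagCount s A (insert i (D \ A)) +
            ∑ A ∈ D.powerset, flagCount s (insert i A) (D \ A) := by
        rw [sum_powerset_insert hi]
        congr 1 <;> refine sum_congr rfl fun A hA => ?_
        · rw [insert_sdiff_of_notMem _ (notMem hA)]
        · rw [insert_sdiff_insert, sdiff_insert_of_notMem hi]
      _ = ∑ A ∈ D.powerset, flagCount s A (insert i (D \ A)) +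
            ∑ A ∈ D.powerset, flagCount s (insert i (D \ A)) A := by
        rw [← sum_powerset_sdiff D fun A => flagCount s (insert i A) (D \ A)]
        congr 1
        exact sum_congr rfl fun A hA => by
          rw [Finset.sdiff_sdiff_eq_self (mem_powerset.1 hA)]
      _ = ∑ A ∈ D.powerset, facetCount s A (insert i (D \ A)) := by
        rw [← sum_add_distrib]
        refine sum_congr rfl fun A hA => ?_
        rw [hs.flagCount_swap (disjoint_insert_right.2 ⟨notMem hA, disjoint_sdiff⟩), ← add_assoc,
          CharTwo.add_self_eq_zero, zero_add]
      _ = 1 := by rw [sum_facetCount_insert s hi, ih]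

/-- There is a maximal flag `∅ = X₀ < X₁ < ⋯ < Xₙ = (P, N)` of signed sets such that `s` takes the
value `1` at each of `X₁, …, Xₙ`. -/
inductive HasPositiveFlag (s : Finset V → Finset V → ZMod 2) : Finset V → Finset V → Prop
  | empty : HasPositiveFlag s ∅ ∅
  | extend {P N : Finset V} {j : V} (hj : j ∈ P ∪ N) (hs : s P N = 1)
      (hflag : HasPositiveFlag s (P.erase j) (N.erase j)) : HasPositiveFlag s P N

theorem HasPositiveFlag.apply_eq_one (h : HasPositiveFlag s P N) (hne : (P ∪ N).Nonempty) :
    s P N = 1 := by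
  cases h with
  | empty => simp at hne
  | extend _ hs _ => exact hs

theorem hasPositiveFlag_of_flagCount_ne_zero (h : flagCount s P N ≠ 0) :
    HasPositiveFlag s P N := by
  induction hn : #(P ∪ N) generalizing P N with
  | zero =>
    obtain ⟨rfl, rfl⟩ := union_eq_empty.1 (card_eq_zero.1 hn)
    exact .empty
  | succ n ih =>
    rw [flagCount_of_nonempty (card_pos.1 (by omega))] at h
    obtain ⟨j, hj, hflag⟩ := exists_ne_zero_of_sum_ne_zero (right_ne_zero_of_mul h)
    refine .extend hj (Fin.eq_one_of_ne_zero _ (left_ne_zero_of_mul h)) (ih hflag ?_)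
    have := card_erase_union_erase hj
    omega

theorem IsAntipodal.exists_hasPositiveFlag (hs : IsAntipodal s) (D : Finset V) :
    ∃ A ⊆ D, HasPositiveFlag s A (D \ A) := by
  obtain ⟨A, hA, hne⟩ :=
    exists_ne_zero_of_sum_ne_zero ((hs.sum_flagCount_eq_one D).trans_ne one_ne_zero)
  exact ⟨A, mem_powerset.1 hA, hasPositiveFlag_of_flagCount_ne_zero hne⟩

theorem IsAntipodal.add_card (hs : IsAntipodal s) :
    IsAntipodal fun P N => s P N + #(P ∪ N) := fun P N hPN hne => by
  simp only [hs hPN hne, union_comm N P]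
  ring

variable (V) in
theorem exists_isAntipodal : ∃ s : Finset V → Finset V → ZMod 2, IsAntipodal s := by
  classical
  refine ⟨fun P N => if ∃ h : (P ∪ N).Nonempty, h.choose ∈ P then 1 else 0, fun P N hPN hne => ?_⟩
  have hmem : hne.choose ∈ P ∨ hne.choose ∈ N := mem_union.1 hne.choose_spec
  have hnot : hne.choose ∈ P → hne.choose ∉ N := fun hP => disjoint_left.1 hPN hP
  simp only [union_comm N P, exists_prop_of_true hne]
  by_cases hP : hne.choose ∈ P
  · rw [if_neg (hnot hP), if_pos hP, CharTwo.add_self_eq_zero]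
  · rw [if_pos (hmem.resolve_left hP), if_neg hP, zero_add]

end SignedSets

section Colorings

variable {V : Type*} {r : ℕ} {c : Finset V → ℕ}

/-- A proper coloring of the Kneser graph of the `r`-element subsets of `V`. The values of `c` at
sets of other sizes are junk. -/
def IsKneserColoring (r : ℕ) (c : Finset V → ℕ) : Prop :=
  ∀ ⦃e₁ e₂⦄, #e₁ = r → #e₂ = r → Disjoint e₁ e₂ → c e₁ ≠ c e₂

theorem IsKneserColoring.pos (hc : IsKneserColoring r c) : 0 < r :=
  Nat.pos_of_ne_zero fun hr => hc (card_empty.trans hr.symm) (card_empty.trans hr.symm)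
    (disjoint_empty_left ∅) rfl

variable [DecidableEq V] {P N P' N' : Finset V}

/-- The largest color of an `r`-set contained in one of the parts of `(P, N)`, or the junk value `0`
if there is no such set. -/
def topColor (r : ℕ) (c : Finset V → ℕ) (P N : Finset V) : ℕ :=
  (P.powersetCard r ∪ N.powersetCard r).sup c

/-- The largest color `topColor r c P N` occurs on the positive part `P`. -/
def IsPositiveTop (r : ℕ) (c : Finset V → ℕ) (P N : Finset V) : Prop :=
  ∃ e ⊆ P, #e = r ∧ c e = topColor r c P N

theorem topColor_swap (r : ℕ) (c : Finset V → ℕ) (P N : Finset V) :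
    topColor r c N P = topColor r c P N := by
  rw [topColor, union_comm, topColor]

theorem topColor_mono (hP : P ⊆ P') (hN : N ⊆ N') : topColor r c P N ≤ topColor r c P' N' :=
  sup_mono (union_subset_union (powersetCard_mono hP) (powersetCard_mono hN))

theorem exists_eq_topColor (c : Finset V → ℕ) (hcard : 2 * r ≤ #(P ∪ N)) :
    ∃ e, (e ⊆ P ∨ e ⊆ N) ∧ #e = r ∧ c e = topColor r c P N := by
  have hne : (P.powersetCard r ∪ N.powersetCard r).Nonempty := by
    have := card_union_le P N
    simp only [union_nonempty, powersetCard_nonempty]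
    omega
  obtain ⟨e, he, htop⟩ := exists_mem_eq_sup _ hne c
  simp only [mem_union, mem_powersetCard, ← or_and_right] at he
  exact ⟨e, he.1, he.2, htop.symm⟩

theorem isPositiveTop_or_swap (hcard : 2 * r ≤ #(P ∪ N)) :
    IsPositiveTop r c P N ∨ IsPositiveTop r c N P := by
  obtain ⟨e, heP | heN, her, htop⟩ := exists_eq_topColor c hcard
  · exact .inl ⟨e, heP, her, htop⟩
  · exact .inr ⟨e, heN, her, htop.trans (topColor_swap r c N P)⟩

theorem IsPositiveTop.mono (h : IsPositiveTop r c P N) (hP : P ⊆ P')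
    (htop : topColor r c P N = topColor r c P' N') : IsPositiveTop r c P' N' :=
  let ⟨e, heP, her, hce⟩ := h
  ⟨e, heP.trans hP, her, hce.trans htop⟩

theorem IsKneserColoring.isPositiveTop_swap_iff (hc : IsKneserColoring r c) (hPN : Disjoint P N)
    (hcard : 2 * r ≤ #(P ∪ N)) : IsPositiveTop r c N P ↔ ¬ IsPositiveTop r c P N := by
  refine ⟨?_, (isPositiveTop_or_swap hcard).resolve_left⟩
  rintro ⟨e, heN, her, hce⟩ ⟨e', he'P, he'r, hce'⟩
  exact hc he'r her (hPN.mono he'P heN) (by rw [hce, hce', topColor_swap])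

theorem IsKneserColoring.isPositiveTop_congr (hc : IsKneserColoring r c) (hP : P ⊆ P') (hN : N ⊆ N')
    (hPN' : Disjoint P' N') (hcard : 2 * r ≤ #(P ∪ N))
    (htop : topColor r c P N = topColor r c P' N') :
    IsPositiveTop r c P N ↔ IsPositiveTop r c P' N' := by
  refine ⟨fun h => h.mono hP htop, fun h' => ?_⟩
  refine (isPositiveTop_or_swap hcard).resolve_right fun h => ?_
  have hswap : IsPositiveTop r c N' P' :=
    h.mono hN (by rw [topColor_swap, htop, topColor_swap])
  exact (hc.isPositiveTop_swap_iff hPN' (hcard.trans (card_le_card (union_subset_union hP hN)))).1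
    hswap h'

open Classical in
/-- The sign labelling of signed sets to which Ky Fan's lemma is applied: with at least `2 * r`
points the sign tells whether the largest color occurs on the positive part; below that, where there
may be no `r`-set in either part, it is given by `s₀`. -/
noncomputable def topSign (s₀ : Finset V → Finset V → ZMod 2) (r : ℕ) (c : Finset V → ℕ)
    (P N : Finset V) : ZMod 2 :=
  if 2 * r ≤ #(P ∪ N) then if IsPositiveTop r c P N then 1 else 0 else s₀ P N

variable {s₀ : Finset V → Finset V → ZMod 2}

theorem IsKneserColoring.isAntipodal_topSign (hc : IsKneserColoring r c) (hs₀ : IsAntipodal s₀) :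
    IsAntipodal (topSign s₀ r c) := by
  intro P N hPN hne
  unfold topSign
  rw [union_comm N P]
  split_ifs with hcard hN hP hP
  · exact absurd hP ((hc.isPositiveTop_swap_iff hPN hcard).1 hN)
  · rw [zero_add]
  · rw [CharTwo.add_self_eq_zero]
  · exact absurd ((hc.isPositiveTop_swap_iff hPN hcard).2 hP) hN
  · exact hs₀ hPN hne

theorem IsKneserColoring.topColor_lt (hc : IsKneserColoring r c) (hP : P ⊆ P') (hN : N ⊆ N')
    (hPN' : Disjoint P' N') (hcard : 2 * r ≤ #(P ∪ N))
    (hs : topSign s₀ r c P N ≠ topSign s₀ r c P' N') :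
    topColor r c P N < topColor r c P' N' := by
  refine (topColor_mono hP hN).lt_of_ne fun htop => hs ?_
  rw [topSign, topSign, if_pos hcard,
    if_pos (hcard.trans (card_le_card (union_subset_union hP hN))),
    propext (hc.isPositiveTop_congr hP hN hPN' hcard htop)]

theorem IsKneserColoring.card_le_of_hasPositiveFlag (hc : IsKneserColoring r c)
    (hPN : Disjoint P N) (hflag : HasPositiveFlag (fun P N => topSign s₀ r c P N + #(P ∪ N)) P N) :
    #(P ∪ N) ≤ 2 * r + topColor r c P N := by
  induction hflag with
  | empty => simp
  | @extend P N j hj hs hflag ih =>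
    have hcard := card_erase_union_erase hj
    obtain hsmall | hlarge : #(P ∪ N) ≤ 2 * r ∨ 2 * r ≤ #(P.erase j ∪ N.erase j) := by omega
    · exact Nat.le_add_right_of_le hsmall
    have hs' : topSign s₀ r c (P.erase j) (N.erase j) + #(P.erase j ∪ N.erase j) = 1 :=
      hflag.apply_eq_one (card_pos.1 (by have := hc.pos; omega))
    have hne : topSign s₀ r c (P.erase j) (N.erase j) ≠ topSign s₀ r c P N := fun heq => by
      rw [heq, ← hs, ← hcard] at hs'
      simp at hs'
    have hlt := hc.topColor_lt (erase_subset j P) (erase_subset j N) hPN hlarge hne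
    have hle := ih (hPN.mono (erase_subset j P) (erase_subset j N))
    omega

end Colorings

theorem IsKneserColoring.exists_le_color {V : Type*} {r k : ℕ} {c : Finset V → ℕ}
    (hc : IsKneserColoring r c) {D : Finset V} (hD : 2 * r + k ≤ #D) :
    ∃ e ⊆ D, #e = r ∧ k ≤ c e := by
  classical
  obtain ⟨s₀, hs₀⟩ := exists_isAntipodal V
  obtain ⟨A, hA, hflag⟩ := (hc.isAntipodal_topSign hs₀).add_card.exists_hasPositiveFlag D
  have hunion : A ∪ D \ A = D := union_sdiff_of_subset hA
  have hle := hc.card_le_of_hasPositiveFlag disjoint_sdiff hflag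
  obtain ⟨e, he, her, htop⟩ := exists_eq_topColor c (P := A) (N := D \ A) (r := r)
    (by rw [hunion]; omega)
  rw [hunion] at hle
  exact ⟨e, he.elim (·.trans hA) (·.trans sdiff_subset), her, by omega⟩

end Kneser

theorem stmt2_general {V ι : Type*} [Finite ι] {r : ℕ} (hr : 0 < r)
    (hV : (2 * r + Nat.card ι : ℕ) ≤ ENat.card V) (E : ι → Set (Finset V))
    (hcover : ∀ e : Finset V, e.card = r → ∃ j, e ∈ E j) :
    ∃ j, ∃ e₁ ∈ E j, ∃ e₂ ∈ E j, e₁.card = r ∧ e₂.card = r ∧ e₁ ≠ e₂ ∧ Disjoint e₁ e₂ := by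
  classical
  have hcolor : ∀ e : Finset V, e.card = r →
      ∃ m, ∃ hm : m < Nat.card ι, e ∈ E ((Finite.equivFin ι).symm ⟨m, hm⟩) := fun e he =>
    let ⟨j, hj⟩ := hcover e he
    ⟨Finite.equivFin ι j, (Finite.equivFin ι j).2, by simpa using hj⟩
  choose! c hlt hmem using hcolor
  obtain ⟨D, hD⟩ : ∃ D : Finset V, D.card = 2 * r + Nat.card ι := by
    obtain ⟨S, -, hS⟩ := Set.exists_subset_encard_eq (hV.trans_eq (Set.encard_univ V).symm)
    obtain ⟨D, rfl⟩ := (Set.finite_of_encard_eq_coe hS).exists_finset_coe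
    exact ⟨D, by exact_mod_cast (Set.encard_coe_eq_coe_finsetCard D).symm.trans hS⟩
  by_contra hcon
  have hproper : Kneser.IsKneserColoring r c := fun e₁ e₂ h₁ h₂ hdisj heq => by
    refine hcon ⟨_, e₁, hmem e₁ h₁, e₂, by simpa only [heq] using hmem e₂ h₂, h₁, h₂, ?_, hdisj⟩
    exact hdisj.ne (Finset.card_pos.1 (h₁ ▸ hr)).ne_empty
  obtain ⟨e, -, her, hle⟩ := hproper.exists_le_color hD.ge
  exact (hlt e her).not_ge hle

/-- Lovász's theorem on Kneser graph colorings. -/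
theorem stmt2 (k r : ℕ) (hk : 0 < k) (hr : 0 < r)
    (E : Fin k → Set (Finset (Fin (2 * r + k))))
    (hsub : ∀ j, ∀ e ∈ E j, e.card = r)
    (hcover : ∀ e : Finset (Fin (2 * r + k)), e.card = r → ∃ j, e ∈ E j) :
    ∃ j : Fin k, ∃ e₁ ∈ E j, ∃ e₂ ∈ E j,
      e₁.card = r ∧ e₂.card = r ∧ e₁ ≠ e₂ ∧ Disjoint e₁ e₂ :=
  stmt2_general hr (by simp) E hcover
end

section
/- Let $G$ be a countable abelian group. If $S \subseteq G$ is equidistributed, then $S$ is a set of optimal recurrence: for every measure preserving $G$-system $(X,\mu,T)$, every measurable $D \subseteq X$, and every $c < \mu(D)^2$, there exists $g \in S$ with $\mu(D \cap T^g D) > c$. -/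
open MeasureTheory Filter

/-- `S` is equidistributed: there are finite subsets `S_j ⊆ S` along which the averages of
every non-constant character `χ : G → 𝕊¹` tend to `0`. -/
def Equidistributed {G : Type*} [AddCommGroup G] (S : Set G) : Prop :=
  ∃ Sj : ℕ → Finset G, (∀ j, (Sj j : Set G) ⊆ S) ∧ (∀ j, (Sj j).Nonempty) ∧
    ∀ χ : G → ℂ, (∀ g h, χ (g + h) = χ g * χ h) → (∀ g, ‖χ g‖ = 1) →
      (∃ g, χ g ≠ 1) →
      Tendsto (fun j => (∑ g ∈ Sj j, χ g) / ((Sj j).card : ℂ)) atTop (nhds 0)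

/-!
By the Bochner–Herglotz theorem, a matrix coefficient `g ↦ ⟪v, U g v⟫` of a unitary representation
is the Fourier transform of a finite measure `ν` on the characters of `G`. By dominated convergence
its averages along an equidistributed sequence of finite sets converge to the mass that `ν` gives to
the trivial character, which is nonnegative. Split the indicator of `D` in `L²(μ)` into its mean
and a vector orthogonal to the constants: under the Koopman representation the first part
contributes `μ(D)²` to the average of `μ(D ∩ T^g D)`, and the second contributes a nonnegative
amount in the limit.
-/

open scoped BigOperators ComplexOrder CompactlySupported InnerProductSpace Pointwise Topology

section RieszMarkovKakutani

variable {Ω : Type*} [TopologicalSpace Ω] [CompactSpace Ω] [T2Space Ω] [MeasurableSpace Ω]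
  [BorelSpace Ω]

theorem exists_measure_positiveLinearMap_ofReal_eq_integral (φ : C(Ω, ℂ) →ₚ[ℂ] ℂ) :
    ∃ ν : Measure Ω, IsFiniteMeasure ν ∧
      ∀ f : C(Ω, ℝ), φ (Complex.ofRealCLM.compLeftContinuous ℝ Ω f) = ∫ ω, (f ω : ℂ) ∂ν := by
  let ι : C(Ω, ℝ) →L[ℝ] C(Ω, ℂ) := Complex.ofRealCLM.compLeftContinuous ℝ Ω
  have hι {f : C(Ω, ℝ)} (hf : 0 ≤ f) : 0 ≤ φ (ι f) :=
    map_nonneg φ fun ω ↦ Complex.zero_le_real.2 (hf ω)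
  let Λ : C_c(Ω, ℝ) →ₚ[ℝ] ℝ := .mk₀
    { toFun f := (φ (ι f.toContinuousMap)).re
      map_add' f g := by rw [← Complex.add_re, ← map_add, ← map_add]; rfl
      map_smul' r f := by
        rw [show (r • f).toContinuousMap = r • f.toContinuousMap from rfl, map_smul,
          ← Complex.coe_smul (E := C(Ω, ℂ)), map_smul]
        simp }
    fun f hf ↦ (Complex.nonneg_iff.1 (hι hf)).1
  refine ⟨RealRMK.rieszMeasure Λ, inferInstance, fun f ↦ ?_⟩
  have hreal : star (φ (ι f)) = φ (ι f) := by
    rw [← map_star]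
    congr 1
    ext ω
    exact Complex.conj_ofReal _
  rw [integral_complex_ofReal, ← Complex.conj_eq_iff_re.1 hreal]
  exact congrArg Complex.ofReal (RealRMK.integral_rieszMeasure Λ
    (CompactlySupportedContinuousMap.continuousMapEquiv f)).symm

theorem exists_measure_positiveLinearMap_eq_integral (φ : C(Ω, ℂ) →ₚ[ℂ] ℂ) :
    ∃ ν : Measure Ω, IsFiniteMeasure ν ∧ ∀ f, φ f = ∫ ω, f ω ∂ν := by
  obtain ⟨ν, hν, hφ⟩ := exists_measure_positiveLinearMap_ofReal_eq_integral φ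
  refine ⟨ν, hν, fun f ↦ ?_⟩
  let re : C(Ω, ℝ) := ⟨fun ω ↦ (f ω).re, by fun_prop⟩
  let im : C(Ω, ℝ) := ⟨fun ω ↦ (f ω).im, by fun_prop⟩
  have hf : f = Complex.ofRealCLM.compLeftContinuous ℝ Ω re +
      Complex.I • Complex.ofRealCLM.compLeftContinuous ℝ Ω im := by
    ext ω
    simp [re, im, mul_comm Complex.I]
  have hint (g : C(Ω, ℝ)) : Integrable (fun ω ↦ (g ω : ℂ)) ν :=
    (by fun_prop : Continuous fun ω ↦ (g ω : ℂ)).integrable_of_hasCompactSupport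
      (.of_compactSpace _)
  calc φ f = ∫ ω, (re ω : ℂ) ∂ν + Complex.I • ∫ ω, (im ω : ℂ) ∂ν := by
        rw [← hφ, ← hφ, ← map_smul, ← map_add, ← hf]
    _ = ∫ ω, f ω ∂ν := by
        rw [← integral_smul, ← integral_add (hint re) ((hint im).fun_smul _)]
        exact integral_congr_ae (.of_forall fun ω ↦ (DFunLike.congr_fun hf ω).symm)

end RieszMarkovKakutani

theorem exists_measure_eq_integral_characterSpace {A : Type*} [CommCStarAlgebra A]
    [MeasurableSpace (WeakDual.characterSpace ℂ A)] [BorelSpace (WeakDual.characterSpace ℂ A)]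
    (φ : A →ₗ[ℂ] ℂ) (hφ : ∀ a, 0 ≤ φ (star a * a)) :
    ∃ ν : Measure (WeakDual.characterSpace ℂ A), IsFiniteMeasure ν ∧
      ∀ a, φ a = ∫ ω, ω a ∂ν := by
  let Γ := gelfandStarTransform A
  obtain ⟨ν, hν, h⟩ := exists_measure_positiveLinearMap_eq_integral <|
    .mk₀ (φ ∘ₗ (Γ.symm : C(WeakDual.characterSpace ℂ A, ℂ) →ₗ[ℂ] A)) fun f hf ↦ by
      obtain ⟨g, rfl⟩ := CStarAlgebra.nonneg_iff_eq_star_mul_self.1 hf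
      simpa [← map_star] using hφ (Γ.symm g)
  refine ⟨ν, hν, fun a ↦ ?_⟩
  calc φ a = φ (Γ.symm (Γ a)) := by rw [Γ.symm_apply_apply]
    _ = ∫ ω, ω a ∂ν := h (Γ a)

section BochnerHerglotz

variable {G : Type*}

/-- The σ-algebra on characters generated by the evaluations `χ ↦ χ g`, on which the spectral
measures of unitary representations are defined. Unlike the Borel σ-algebra of the dual group it
needs no topology on `G`. -/
noncomputable abbrev evalMeasurableSpace (G : Type*) [AddMonoid G] :
    MeasurableSpace (AddChar G Circle) :=
  MeasurableSpace.comap (fun χ g ↦ (χ g : ℂ)) MeasurableSpace.pi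

attribute [local instance] evalMeasurableSpace

theorem measurable_addChar_apply [AddMonoid G] (g : G) :
    Measurable fun χ : AddChar G Circle ↦ (χ g : ℂ) :=
  (measurable_pi_apply g).comp (comap_measurable fun (χ : AddChar G Circle) g ↦ (χ g : ℂ))

section CommCStarAlgebra

variable [AddMonoid G] {A : Type*} [CommCStarAlgebra A]

/-- The character `g ↦ ω (u g)` of `G` obtained by evaluating a representation `u` of `G` by
unitaries of a commutative C⋆-algebra at a point `ω` of its spectrum. -/
noncomputable def evalCharacter (u : AddChar G (unitary A)) (ω : WeakDual.characterSpace ℂ A) :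
    AddChar G Circle where
  toFun g := ⟨ω (u g), spectrum.subset_circle_of_unitary (u g).2
    (WeakDual.CharacterSpace.apply_mem_spectrum ω _)⟩
  map_zero_eq_one' := by ext; simp
  map_add_eq_mul' g h := Circle.ext <|
    (congrArg (fun v : unitary A ↦ ω v) (u.map_add_eq_mul g h)).trans (map_mul ω _ _)

theorem measurable_evalCharacter [MeasurableSpace (WeakDual.characterSpace ℂ A)]
    [OpensMeasurableSpace (WeakDual.characterSpace ℂ A)] (u : AddChar G (unitary A)) :
    Measurable (evalCharacter u) := by
  refine measurable_comap_iff.2 (measurable_pi_iff.2 fun g ↦ Continuous.measurable ?_)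
  exact (WeakDual.eval_continuous (u g : A)).comp continuous_subtype_val

theorem exists_measure_eq_integral_addChar_of_commCStarAlgebra (φ : A →ₗ[ℂ] ℂ)
    (hφ : ∀ a, 0 ≤ φ (star a * a)) (u : AddChar G (unitary A)) :
    ∃ ν : Measure (AddChar G Circle), IsFiniteMeasure ν ∧ ∀ g, φ (u g) = ∫ χ, (χ g : ℂ) ∂ν := by
  borelize ↥(WeakDual.characterSpace ℂ A)
  obtain ⟨ν, hν, h⟩ := exists_measure_eq_integral_characterSpace φ hφ
  have hu := measurable_evalCharacter u
  refine ⟨ν.map (evalCharacter u), inferInstance, fun g ↦ ?_⟩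
  rw [h, integral_map hu.aemeasurable (measurable_addChar_apply g).aestronglyMeasurable]
  rfl

end CommCStarAlgebra

theorem exists_measure_eq_integral_addChar [AddCommMonoid G] {B : Type*} [CStarAlgebra B]
    (φ : B →ₗ[ℂ] ℂ) (hφ : ∀ b, 0 ≤ φ (star b * b)) (u : AddChar G (unitary B)) :
    ∃ ν : Measure (AddChar G Circle), IsFiniteMeasure ν ∧ ∀ g, φ (u g) = ∫ χ, (χ g : ℂ) ∂ν := by
  let A₀ := StarAlgebra.adjoin ℂ (Set.range fun g ↦ (u g : B))
  have hu (g h : G) : Commute (u g) (u h) := by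
    rw [commute_iff_eq, ← AddChar.map_add_eq_mul, add_comm, AddChar.map_add_eq_mul]
  have hcomm : IsMulCommutative A₀ := by
    refine StarAlgebra.isMulCommutative_adjoin ℂ ?_ ?_
    · rintro _ ⟨g, rfl⟩ _ ⟨h, rfl⟩
      exact congrArg Subtype.val (hu g h).eq
    · rintro _ ⟨g, rfl⟩ _ ⟨h, rfl⟩
      exact congrArg Subtype.val (hu g h).inv_right.eq
  let A := A₀.topologicalClosure
  let : CommCStarAlgebra A :=
    { StarSubalgebra.cstarAlgebra A (h_closed := A₀.isClosed_topologicalClosure),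
      StarSubalgebra.commRingTopologicalClosure A₀ hcomm.is_comm.comm with }
  have hmem (g : G) : (u g : B) ∈ A :=
    A₀.le_topologicalClosure (StarAlgebra.subset_adjoin ℂ _ ⟨g, rfl⟩)
  let uA : AddChar G (unitary A) :=
    { toFun g := ⟨⟨u g, hmem g⟩, Unitary.mem_iff.2
        ⟨Subtype.ext (Unitary.coe_star_mul_self (u g)),
          Subtype.ext (Unitary.coe_mul_star_self (u g))⟩⟩
      map_zero_eq_one' := by ext; simp
      map_add_eq_mul' g h := by ext; simp [AddChar.map_add_eq_mul] }
  exact exists_measure_eq_integral_addChar_of_commCStarAlgebra (φ ∘ₗ A.subtype.toLinearMap)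
    (fun a ↦ hφ a) uA

theorem exists_measure_inner_eq_integral_addChar [AddCommMonoid G] {H : Type*}
    [NormedAddCommGroup H] [InnerProductSpace ℂ H] [CompleteSpace H]
    (u : AddChar G (unitary (H →L[ℂ] H))) (v : H) :
    ∃ ν : Measure (AddChar G Circle), IsFiniteMeasure ν ∧
      ∀ g, ⟪v, (u g : H →L[ℂ] H) v⟫_ℂ = ∫ χ, (χ g : ℂ) ∂ν := by
  let φ : (H →L[ℂ] H) →ₗ[ℂ] ℂ :=
    (innerSL ℂ v).toLinearMap ∘ₗ (ContinuousLinearMap.apply ℂ H v).toLinearMap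
  refine exists_measure_eq_integral_addChar φ (fun a ↦ ?_) u
  calc 0 ≤ ⟪a v, a v⟫_ℂ := by rw [inner_self_eq_norm_sq_to_K]; positivity
    _ = φ (star a * a) := (ContinuousLinearMap.adjoint_inner_right a v (a v)).symm

end BochnerHerglotz

section Equidistribution

variable {G ι : Type*} [AddMonoid G]

attribute [local instance] evalMeasurableSpace

/-- The averages over the finite sets `F i` of every nontrivial character tend to `0` along `l`.
The value `1` of the limit at the trivial character says that `F i` is eventually nonempty. -/
def EquidistributedAlong (l : Filter ι) (F : ι → Finset G) : Prop :=
  ∀ χ : AddChar G Circle,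
    Tendsto (fun i ↦ 𝔼 g ∈ F i, (χ g : ℂ)) l (𝓝 (({1} : Set (AddChar G Circle)).indicator 1 χ))

theorem Equidistributed.exists_equidistributedAlong {G : Type*} [AddCommGroup G] {S : Set G}
    (hS : Equidistributed S) :
    ∃ F : ℕ → Finset G, (∀ j, (F j : Set G) ⊆ S) ∧ EquidistributedAlong atTop F := by
  obtain ⟨F, hFS, hF, h⟩ := hS
  refine ⟨F, hFS, fun χ ↦ ?_⟩
  by_cases hχ : χ = 1
  · simp [hχ, Finset.expect_const (hF _)]
  · obtain ⟨g, hg⟩ := DFunLike.ne_iff.1 hχ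
    simp_rw [Finset.expect_eq_sum_div_card]
    simpa [hχ] using h (fun g ↦ (χ g : ℂ))
      (fun g h ↦ by rw [χ.map_add_eq_mul, Circle.coe_mul]) (fun g ↦ Circle.norm_coe _)
      ⟨g, fun h ↦ hg (Circle.coe_eq_one.1 h)⟩

namespace EquidistributedAlong

variable {l : Filter ι} {F : ι → Finset G}

theorem eventually_nonempty (hF : EquidistributedAlong l F) : ∀ᶠ i in l, (F i).Nonempty := by
  have h1 : Tendsto (fun i ↦ 𝔼 _g ∈ F i, (1 : ℂ)) l (𝓝 1) := by simpa using hF 1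
  filter_upwards [h1.eventually_ne one_ne_zero] with i hi
  contrapose! hi
  simp [hi]

theorem tendsto_expect_integral [l.IsCountablyGenerated] (hF : EquidistributedAlong l F)
    (ν : Measure (AddChar G Circle)) [IsFiniteMeasure ν] :
    Tendsto (fun i ↦ 𝔼 g ∈ F i, ∫ χ, (χ g : ℂ) ∂ν) l
      (𝓝 (∫ χ, ({1} : Set (AddChar G Circle)).indicator 1 χ ∂ν)) := by
  have hint (g : G) : Integrable (fun χ : AddChar G Circle ↦ (χ g : ℂ)) ν :=
    .of_bound (measurable_addChar_apply g).aestronglyMeasurable 1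
      (.of_forall fun χ ↦ (Circle.norm_coe _).le)
  have hexpect (i : ι) : 𝔼 g ∈ F i, ∫ χ, (χ g : ℂ) ∂ν = ∫ χ, 𝔼 g ∈ F i, (χ g : ℂ) ∂ν := by
    simp_rw [Finset.expect_eq_sum_div_card]
    rw [integral_div, integral_finsetSum _ fun g _ ↦ hint g]
  simp_rw [hexpect]
  refine tendsto_integral_filter_of_dominated_convergence (fun _ ↦ 1) ?_ ?_ (integrable_const _)
    (.of_forall hF)
  · refine .of_forall fun i ↦ Measurable.aestronglyMeasurable ?_
    simp_rw [Finset.expect_eq_sum_div_card]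
    exact (Finset.measurable_sum _ fun g _ ↦ measurable_addChar_apply g).div_const _
  · refine .of_forall fun i ↦ .of_forall fun χ ↦ ?_
    calc ‖𝔼 g ∈ F i, (χ g : ℂ)‖ ≤ 𝔼 g ∈ F i, ‖(χ g : ℂ)‖ := RCLike.norm_expect_le (K := ℂ)
      _ = (F i).card / (F i).card := by simp [Finset.expect_eq_sum_div_card, Circle.norm_coe]
      _ ≤ 1 := div_self_le_one _

end EquidistributedAlong

end Equidistribution

theorem inner_add_map_add_of_fixed {𝕜 H : Type*} [RCLike 𝕜] [NormedAddCommGroup H]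
    [InnerProductSpace 𝕜 H] [CompleteSpace H] (u : unitary (H →L[𝕜] H)) {p q : H}
    (hp : (u : H →L[𝕜] H) p = p) (hpq : ⟪p, q⟫_𝕜 = 0) :
    ⟪p + q, (u : H →L[𝕜] H) (p + q)⟫_𝕜 = (‖p‖ : 𝕜) ^ 2 + ⟪q, (u : H →L[𝕜] H) q⟫_𝕜 := by
  have hpu : ⟪p, (u : H →L[𝕜] H) q⟫_𝕜 = 0 := by rw [← hpq, ← Unitary.inner_map_map u p q, hp]
  rw [map_add, hp, inner_add_left, inner_add_right, inner_add_right, hpu,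
    inner_eq_zero_symm.1 hpq, inner_self_eq_norm_sq_to_K, add_zero, zero_add]

namespace EquidistributedAlong

variable {G ι H : Type*} [AddCommMonoid G] [NormedAddCommGroup H] [InnerProductSpace ℂ H]
  [CompleteSpace H] {l : Filter ι} [l.IsCountablyGenerated] {F : ι → Finset G}

theorem exists_tendsto_expect_inner (hF : EquidistributedAlong l F)
    (u : AddChar G (unitary (H →L[ℂ] H))) (v : H) :
    ∃ L : ℝ, 0 ≤ L ∧ Tendsto (fun i ↦ 𝔼 g ∈ F i, ⟪v, (u g : H →L[ℂ] H) v⟫_ℂ) l (𝓝 L) := by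
  obtain ⟨ν, hν, h⟩ := exists_measure_inner_eq_integral_addChar u v
  have hlim : 0 ≤ ∫ χ, ({1} : Set (AddChar G Circle)).indicator (1 : AddChar G Circle → ℂ) χ ∂ν :=
    integral_nonneg (Set.indicator_nonneg fun _ _ ↦ zero_le_one)
  obtain ⟨L, hL, hLν⟩ := RCLike.nonneg_iff_exists_ofReal.1 hlim
  refine ⟨L, hL, ?_⟩
  simp_rw [h]
  rw [show (L : ℂ) = _ from hLν]
  exact hF.tendsto_expect_integral ν

theorem exists_tendsto_expect_inner_of_fixed (hF : EquidistributedAlong l F)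
    (u : AddChar G (unitary (H →L[ℂ] H))) {e : H} (he : ∀ g, (u g : H →L[ℂ] H) e = e)
    (f : H) :
    ∃ L : ℝ, ‖⟪e, f⟫_ℂ‖ ^ 2 ≤ L * ‖e‖ ^ 2 ∧
      Tendsto (fun i ↦ 𝔼 g ∈ F i, ⟪f, (u g : H →L[ℂ] H) f⟫_ℂ) l (𝓝 L) := by
  set p := (ℂ ∙ e).starProjection f with hp
  have hpfix (g : G) : (u g : H →L[ℂ] H) p = p := by
    obtain ⟨a, ha⟩ := Submodule.mem_span_singleton.1 ((ℂ ∙ e).starProjection_apply_mem f)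
    rw [hp, ← ha, map_smul, he]
  have horth (w : H) (hw : w ∈ ℂ ∙ e) : ⟪w, f - p⟫_ℂ = 0 :=
    (ℂ ∙ e).inner_right_of_mem_orthogonal hw (Submodule.sub_starProjection_mem_orthogonal f)
  obtain ⟨L, hL, hlim⟩ := hF.exists_tendsto_expect_inner u (f - p)
  refine ⟨‖p‖ ^ 2 + L, ?_, ?_⟩
  · calc ‖⟪e, f⟫_ℂ‖ ^ 2 = ‖⟪e, p⟫_ℂ‖ ^ 2 := by
          rw [sub_eq_zero.1 ((inner_sub_right e f p).symm.trans
            (horth e (Submodule.mem_span_singleton_self e)))]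
      _ ≤ (‖e‖ * ‖p‖) ^ 2 := by gcongr; exact norm_inner_le_norm e p
      _ = ‖p‖ ^ 2 * ‖e‖ ^ 2 := by rw [mul_pow, mul_comm]
      _ ≤ (‖p‖ ^ 2 + L) * ‖e‖ ^ 2 := by gcongr; exact le_add_of_nonneg_right hL
  · have hsplit (g : G) : ⟪f, (u g : H →L[ℂ] H) f⟫_ℂ =
        ‖p‖ ^ 2 + ⟪f - p, (u g : H →L[ℂ] H) (f - p)⟫_ℂ := by
      have h := inner_add_map_add_of_fixed (u g) (hpfix g)
        (horth p ((ℂ ∙ e).starProjection_apply_mem f))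
      rwa [add_sub_cancel] at h
    push_cast
    refine (hlim.const_add _).congr' (hF.eventually_nonempty.mono fun i hi ↦ ?_)
    simp_rw [hsplit, Finset.expect_add_distrib, Finset.expect_const hi]

end EquidistributedAlong

section Koopman

variable {G X : Type*} [AddCommGroup G] [AddAction G X] [MeasurableSpace X]
  [MeasurableConstVAdd G X]

/-- The Koopman representation of a measure preserving action of `G` on `L²(μ)`, acting by
`f ↦ f ∘ (g +ᵥ ·)`; this is a homomorphism, rather than an antihomomorphism, because `G` is
commutative. -/
noncomputable def koopman (μ : Measure X) [VAddInvariantMeasure G X μ] :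
    AddChar G (unitary (Lp ℂ 2 μ →L[ℂ] Lp ℂ 2 μ)) where
  toFun g := Unitary.linearIsometryEquiv.symm
    { Lp.compMeasurePreservingₗᵢ ℂ (g +ᵥ ·) (measurePreserving_vadd g μ) with
      invFun f := DomAddAct.mk (-g) +ᵥ f
      left_inv := neg_vadd_vadd (DomAddAct.mk g)
      right_inv := vadd_neg_vadd (DomAddAct.mk g) }
  map_zero_eq_one' := Subtype.ext <| ContinuousLinearMap.ext fun f ↦
    zero_vadd (DomAddAct G) f
  map_add_eq_mul' g h := Subtype.ext <| ContinuousLinearMap.ext fun f ↦ by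
    rw [add_comm g h]
    exact add_vadd (DomAddAct.mk g) (DomAddAct.mk h) f

variable {μ : Measure X} [VAddInvariantMeasure G X μ]

theorem koopman_apply (g : G) (f : Lp ℂ 2 μ) :
    (koopman μ g : Lp ℂ 2 μ →L[ℂ] Lp ℂ 2 μ) f = DomAddAct.mk g +ᵥ f := rfl

variable [IsFiniteMeasure μ]

theorem inner_indicatorConstLp_koopman {D : Set X} (hD : MeasurableSet D) (g : G) :
    ⟪indicatorConstLp 2 hD (measure_ne_top μ D) (1 : ℂ),
      (koopman μ g : Lp ℂ 2 μ →L[ℂ] Lp ℂ 2 μ) (indicatorConstLp 2 hD (measure_ne_top μ D) 1)⟫_ℂ =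
      μ.real (D ∩ (g +ᵥ D)) := by
  have hpre : (g +ᵥ ·) ⁻¹' (D ∩ (g +ᵥ D)) = D ∩ (g +ᵥ ·) ⁻¹' D := by
    rw [Set.preimage_inter, Set.preimage_vadd, Set.preimage_vadd, neg_vadd_vadd, Set.inter_comm]
  rw [koopman_apply, DomAddAct.mk_vadd_indicatorConstLp,
    L2.inner_indicatorConstLp_one_indicatorConstLp_one, ← hpre, measureReal_def,
    measure_preimage_vadd, measureReal_def]
  rfl

theorem exists_tendsto_expect_measureReal_inter_vadd {ι : Type*} {l : Filter ι}
    [l.IsCountablyGenerated] {F : ι → Finset G} (hF : EquidistributedAlong l F) {D : Set X}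
    (hD : MeasurableSet D) :
    ∃ L : ℝ, μ.real D ^ 2 ≤ L * μ.real Set.univ ∧
      Tendsto (fun i ↦ 𝔼 g ∈ F i, μ.real (D ∩ (g +ᵥ D))) l (𝓝 L) := by
  let e := indicatorConstLp 2 .univ (measure_ne_top μ Set.univ) (1 : ℂ)
  have he (g : G) : (koopman μ g : Lp ℂ 2 μ →L[ℂ] Lp ℂ 2 μ) e = e := by
    rw [koopman_apply, DomAddAct.mk_vadd_indicatorConstLp]
    rfl
  obtain ⟨L, hL, hlim⟩ := hF.exists_tendsto_expect_inner_of_fixed (koopman μ) he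
    (indicatorConstLp 2 hD (measure_ne_top μ D) 1)
  refine ⟨L, ?_, ?_⟩
  · have hnorm : ‖e‖ ^ 2 = μ.real Set.univ := by
      rw [@norm_sq_eq_re_inner ℂ, L2.inner_indicatorConstLp_one_indicatorConstLp_one,
        Set.inter_self]
      rfl
    rw [L2.inner_indicatorConstLp_one_indicatorConstLp_one, hnorm] at hL
    simpa using hL
  · simp_rw [inner_indicatorConstLp_koopman] at hlim
    rw [← tendsto_ofReal_iff]
    exact_mod_cast hlim

end Koopman

theorem stmt19_general {G : Type*} [AddCommGroup G] {S : Set G} (hS : Equidistributed S)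
    {X : Type*} [MeasurableSpace X] (μ : Measure X) [IsFiniteMeasure μ] (T : G → X → X)
    (hT : ∀ g, MeasurePreserving (T g) μ μ) (hadd : ∀ g h x, T (g + h) x = T g (T h x))
    (hzero : ∀ x, T 0 x = x) {D : Set X} (hD : MeasurableSet D) {c : ℝ}
    (hc : c * μ.real Set.univ < μ.real D ^ 2) :
    ∃ g ∈ S, c < μ.real (D ∩ T g '' D) := by
  let : AddAction G X := { vadd := T, zero_vadd := hzero, add_vadd := hadd }
  have : MeasurableConstVAdd G X := ⟨fun g ↦ (hT g).measurable⟩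
  have : VAddInvariantMeasure G X μ := ⟨fun g _ hs ↦ (hT g).measure_preimage hs.nullMeasurableSet⟩
  obtain ⟨F, hFS, hF⟩ := hS.exists_equidistributedAlong
  obtain ⟨L, hL, hlim⟩ := exists_tendsto_expect_measureReal_inter_vadd (μ := μ) hF hD
  have hcL : c < L := lt_of_mul_lt_mul_right (hc.trans_le hL) measureReal_nonneg
  obtain ⟨j, hj, hjF⟩ := ((hlim.eventually_const_lt hcL).and hF.eventually_nonempty).exists
  obtain ⟨g, hg, hcg⟩ := Finset.exists_lt_of_lt_expect hjF hj
  exact ⟨g, hFS j hg, hcg⟩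

theorem stmt19 {G : Type*} [AddCommGroup G] [Countable G] (S : Set G)
    (hS : Equidistributed S)
    (X : Type) (_ : MeasurableSpace X) (μ : Measure X) (_ : IsProbabilityMeasure μ)
    (T : G → X → X) (hT : ∀ g, MeasurePreserving (T g) μ μ)
    (hadd : ∀ g h x, T (g + h) x = T g (T h x)) (hzero : ∀ x, T 0 x = x)
    (D : Set X) (hD : MeasurableSet D) (c : ℝ) (hc : c < (μ D).toReal ^ 2) :
    ∃ g ∈ S, c < (μ (D ∩ T g '' D)).toReal :=
  stmt19_general hS μ T hT hadd hzero hD (by simpa [measureReal_def] using hc)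
end
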